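/- Let $R_1, R_2$ be commutative local rings with unity whose maximal ideals are principal, generated by $a$ and $b$ respectively, with nilpotent indices $5$ and $2$ (i.e., $a^4 \neq 0$, $a^5 = 0$, $b \neq 0$, $b^2 = 0$). Then $\Gamma_r(R_1 \times R_2)$ contains $K_{3,3}$ as a subgraph, with parts $\{(a)\times(0),\ (a^2)\times(0),\ R_1\times(0)\}$ and $\{(0)\times R_2,\ (a^3)\times(b),\ (a^4)\times(b)\}$. -/

import Mathlib

/-- Adjacency in the reduced cozero-divisor graph `Γ_r(R)`:
the two ideals are nontrivial principal ideals (vertices of the graph),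
they are distinct, and neither is properly contained in the other. -/
def redCozeroAdj {R : Type*} [CommRing R] (I J : Ideal R) : Prop :=
  (I.IsPrincipal ∧ I ≠ ⊥ ∧ I ≠ ⊤) ∧ (J.IsPrincipal ∧ J ≠ ⊥ ∧ J ≠ ⊤) ∧
    I ≠ J ∧ ¬ I < J ∧ ¬ J < I

theorem aux_le {R₁ R₂ : Type*} [CommRing R₁] [CommRing R₂] (x u : R₁) (y v : R₂) :
    Ideal.span {(x, y)} ≤ Ideal.span {(u, v)} ↔ u ∣ x ∧ v ∣ y := by
  rw [Ideal.span_singleton_le_span_singleton, prod_dvd_iff]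

theorem aux_adj {R : Type*} [CommRing R] (x y : R)
    (hx : x ≠ 0) (hy : y ≠ 0) 
    (h1 : ¬ Ideal.span {x} ≤ Ideal.span {y}) (h2 : ¬ Ideal.span {y} ≤ Ideal.span {x}) :
    redCozeroAdj (Ideal.span {x}) (Ideal.span {y}) := by
  refine ⟨⟨⟨x, rfl⟩, ?_, ?_⟩, ⟨⟨y, rfl⟩, ?_, ?_⟩, ?_, ?_, ?_⟩
  · simpa using hx
  · intro h; exact h2 (h ▸ le_top)
  · simpa using hy
  · intro h; exact h1 (h ▸ le_top)
  · intro h; exact h1 h.le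
  · intro h; exact h1 h.le
  · intro h; exact h2 h.le

theorem aux_inj {R : Type*} [CommRing R] (I J K : Ideal R) (h1 : I ≠ J) (h2 : I ≠ K)
    (h3 : J ≠ K) : Function.Injective ![I, J, K] := by
  intro i j h
  fin_cases i <;> fin_cases j <;> simp_all [eq_comm]

/-- Let `R₁, R₂` be commutative local rings whose maximal ideals are principal,
generated by `a` resp. `b`, with nilpotent indices `5` and `2`.  Then
`Γ_r(R₁ × R₂)` contains `K_{3,3}` as a subgraph with parts
`{(a)×(0), (a²)×(0), R₁×(0)}` and `{(0)×R₂, (a³)×(b), (a⁴)×(b)}`. -/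
theorem stmt13 (R₁ R₂ : Type*) [CommRing R₁] [CommRing R₂]
    [IsLocalRing R₁] [IsLocalRing R₂]
    (a : R₁) (hmaxa : IsLocalRing.maximalIdeal R₁ = Ideal.span {a})
    (ha4 : a ^ 4 ≠ 0) (ha5 : a ^ 5 = 0)
    (b : R₂) (hmaxb : IsLocalRing.maximalIdeal R₂ = Ideal.span {b})
    (hb1 : b ≠ 0) (hb2 : b ^ 2 = 0)
    (A B : Fin 3 → Ideal (R₁ × R₂))
    (hA : A = ![Ideal.span {(a, (0 : R₂))}, Ideal.span {(a ^ 2, (0 : R₂))},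
                Ideal.span {((1 : R₁), (0 : R₂))}])
    (hB : B = ![Ideal.span {((0 : R₁), (1 : R₂))}, Ideal.span {(a ^ 3, b)},
                Ideal.span {(a ^ 4, b)}]) :
    Function.Injective A ∧ Function.Injective B ∧ (∀ i j, A i ≠ B j) ∧
      ∀ i j, redCozeroAdj (A i) (B j) := by
  have key : ∀ m n : ℕ, n < m → n ≤ 4 → ¬ a ^ m ∣ a ^ n := by
    rintro m n hnm hn ⟨c, hc⟩
    apply ha4
    have h5 : a ^ (m + (4 - n)) = 0 := by
      rw [show m + (4 - n) = 5 + (m + (4 - n) - 5) by omega, pow_add, ha5, zero_mul]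
    calc a ^ 4 = a ^ n * a ^ (4 - n) := by rw [← pow_add]; congr 1; omega
      _ = a ^ (m + (4 - n)) * c := by rw [hc, pow_add]; ring
      _ = 0 := by rw [h5, zero_mul]
  have nz : ∀ n : ℕ, n ≤ 4 → a ^ n ≠ 0 := by
    intro n hn h
    exact key 5 n (by omega) hn (by rw [h]; exact dvd_zero _)
  have hA' : ∀ i, ∃ n : ℕ, n ≤ 2 ∧ A i = Ideal.span {(a ^ n, (0 : R₂))} := by
    intro i
    subst hA
    fin_cases i
    · exact ⟨1, by omega, by simp⟩
    · exact ⟨2, by omega, by simp⟩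
    · exact ⟨0, by omega, by simp⟩
  have hB' : ∀ j, ∃ (m : ℕ) (v : R₂), 3 ≤ m ∧ v ≠ 0 ∧ B j = Ideal.span {(a ^ m, v)} := by
    intro j
    subst hB
    fin_cases j
    · exact ⟨5, 1, by omega, one_ne_zero, by simp [ha5]⟩
    · exact ⟨3, b, by omega, hb1, by simp⟩
    · exact ⟨4, b, by omega, hb1, by simp⟩
  have adj : ∀ i j, redCozeroAdj (A i) (B j) := by
    intro i j
    obtain ⟨n, hn, e⟩ := hA' i
    obtain ⟨m, v, hm, hv, e'⟩ := hB' j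
    rw [e, e']
    apply aux_adj
    · intro h; exact nz n (by omega) (congrArg Prod.fst h)
    · intro h; exact hv (congrArg Prod.snd h)
    · rw [aux_le]; intro h; exact key m n (by omega) (by omega) h.1
    · rw [aux_le]; intro h; exact hv (zero_dvd_iff.mp h.2)
  refine ⟨?_, ?_, fun i j => (adj i j).2.2.1, adj⟩
  · rw [hA]
    apply aux_inj
    · intro h; have := ((aux_le _ _ _ _).1 h.le).1
      exact key 2 1 (by omega) (by omega) (by simpa using this)
    · intro h; have := ((aux_le _ _ _ _).1 h.ge).1
      exact key 1 0 (by omega) (by omega) (by simpa using this)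
    · intro h; have := ((aux_le _ _ _ _).1 h.ge).1
      exact key 2 0 (by omega) (by omega) (by simpa using this)
  · rw [hB]
    apply aux_inj
    · intro h; have := ((aux_le _ _ _ _).1 h.ge).1
      exact nz 3 (by omega) (zero_dvd_iff.mp this)
    · intro h; have := ((aux_le _ _ _ _).1 h.ge).1
      exact nz 4 (by omega) (zero_dvd_iff.mp this)
    · intro h; have := ((aux_le _ _ _ _).1 h.le).1
      exact key 4 3 (by omega) (by omega) this
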